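/- Let C be a finite quotienting Boolean algebra of regular languages. For every k ∈ ℕ and every level n ∈ ½ℕ, the tagging (τ_k: 𝔼* → T_k, T_k), where T_k is the cyclic monoid ℤ/kℤ and τ_k maps every letter of 𝔼 to the generator 1 (so τ_k computes the length of a word modulo k), fools the class C_𝔼[n]. -/

import Mathlib

/-! Infrastructure: classes of languages (one set of languages for every finite
alphabet, alphabets being modelled as types), quotienting lattices, Boolean and
polynomial closure, separation, regular languages, recognition by monoid morphisms,
and the notions of extension and fooling tagging from the paper. The fixed two-letter
alphabet `𝔼 = {0,1}` is modelled as `Bool`, and the disjoint union `A ∪ 𝔼` as the sum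
type `A ⊕ Bool`. On `Language A` (which is `Set (List A)`) we use the lattice
operations `≤, ⊓, ⊔, ⊥` for `⊆, ∩, ∪, ∅`. -/

/-- A class of languages: to every alphabet it associates a set of languages. -/
abbrev LangClass : Type 1 := ∀ A : Type, Set (Language A)

/-- A morphism `α : A* → M` recognizes `L` when `L = α⁻¹(F)` for some `F ⊆ M`. -/
def Recognizes {A M : Type} [Monoid M] (α : FreeMonoid A →* M) (L : Language A) : Prop :=
  ∃ F : Set M, L = {w : List A | α (FreeMonoid.ofList w) ∈ F}

/-- A language is regular when it is recognized by a DFA with finitely many states. -/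
def IsRegularLang {A : Type} (L : Language A) : Prop :=
  ∃ (σ : Type) (_ : Fintype σ) (M : DFA A σ), M.accepts = L

/-- `C` is a lattice (of languages): each `C(A)` contains `∅` and `A*` and is closed
under finite union and finite intersection. -/
def IsLatticeClass (C : LangClass) : Prop :=
  ∀ (A : Type) [Fintype A], (⊥ : Language A) ∈ C A ∧ (⊤ : Language A) ∈ C A ∧
    ∀ K L : Language A, K ∈ C A → L ∈ C A → K ⊔ L ∈ C A ∧ K ⊓ L ∈ C A

/-- `C` is quotienting: closed under left and right quotients by words. -/
def IsQuotienting (C : LangClass) : Prop :=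
  ∀ (A : Type) [Fintype A], ∀ L ∈ C A, ∀ u : List A,
    {w : List A | u ++ w ∈ L} ∈ C A ∧ {w : List A | w ++ u ∈ L} ∈ C A

/-- `C` is closed under inverse images of monoid morphisms between free monoids. -/
def ClosedInvImage (C : LangClass) : Prop :=
  ∀ (A B : Type) [Fintype A] [Fintype B] (φ : FreeMonoid A →* FreeMonoid B),
    ∀ L ∈ C B, {w : List A | FreeMonoid.toList (φ (FreeMonoid.ofList w)) ∈ L} ∈ C A

/-- Boolean closure: the least set of languages containing `S` and closed under
Boolean operations (union, intersection, complement). -/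
inductive BoolClosure {A : Type} (S : Set (Language A)) : Language A → Prop
  | base {L : Language A} : L ∈ S → BoolClosure S L
  | compl {L : Language A} : BoolClosure S L → BoolClosure S Lᶜ
  | union {K L : Language A} : BoolClosure S K → BoolClosure S L → BoolClosure S (K ⊔ L)
  | inter {K L : Language A} : BoolClosure S K → BoolClosure S L → BoolClosure S (K ⊓ L)

/-- Polynomial closure: the least set of languages containing `S` and closed under
finite union and marked concatenation `K a L`. -/
inductive PolClosure {A : Type} (S : Set (Language A)) : Language A → Prop
  | base {L : Language A} : L ∈ S → PolClosure S L
  | union {K L : Language A} : PolClosure S K → PolClosure S L → PolClosure S (K ⊔ L)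
  | marked {K L : Language A} (a : A) :
      PolClosure S K → PolClosure S L → PolClosure S (K * {[a]} * L)

/-- Level `k/2` of the concatenation hierarchy of basis `C` (levels are counted in
half units: index `k` is level `k/2`, so `C[0] = C`, `C[n + 1/2] = Pol(C[n])` and
`C[n + 1] = Bool(C[n + 1/2])`). -/
def hlevel (C : LangClass) : ℕ → LangClass
  | 0 => C
  | k + 1 => fun A =>
      if k % 2 = 0 then {L | PolClosure (hlevel C k A) L}
      else {L | BoolClosure (hlevel C k A) L}

/-- `L₁` is `𝒞`-separable from `L₂`: some `K ∈ 𝒞` includes `L₁` and is disjoint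
from `L₂`. -/
def Separable {A : Type} (𝒞 : Set (Language A)) (L₁ L₂ : Language A) : Prop :=
  ∃ K ∈ 𝒞, L₁ ≤ K ∧ L₂ ⊓ K = ⊥

/-- `γ : (A ∪ 𝔼)* → A*`, the morphism erasing the letters of `𝔼`. -/
def eraseE {A : Type} (w : List (A ⊕ Bool)) : List A :=
  w.filterMap (fun x => Sum.elim some (fun _ => none) x)

/-- `λᵤ : A* → (A ∪ 𝔼)*`, the morphism defined by `λᵤ(a) = a · u`. -/
def padWith {A : Type} (u : List Bool) (w : List A) : List (A ⊕ Bool) :=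
  w.flatMap (fun a => Sum.inl a :: u.map Sum.inr)

/-- `D` is an extension of `C`. -/
def Extension (C D : LangClass) : Prop :=
  ∀ (A : Type) [Fintype A],
    (∀ K ∈ C A, {w : List (A ⊕ Bool) | eraseE w ∈ K} ∈ D (A ⊕ Bool)) ∧
    (∀ u : List Bool, ∀ K ∈ D (A ⊕ Bool), {w : List A | padWith u w ∈ K} ∈ C A)

/-- The tagging `P = (τ : 𝔼* → T, G)` fools the class `D`. -/
def Fools {T : Type} [Monoid T] (τ : FreeMonoid Bool →* T) (G : Finset T)
    (D : LangClass) : Prop :=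
  ∀ (A : Type) [Fintype A] (M : Type) [Monoid M] [Fintype M]
    (α : FreeMonoid (A ⊕ Bool) →* M),
    (∀ L : Language (A ⊕ Bool), Recognizes α L → BoolClosure (D (A ⊕ Bool)) L) →
    ∃ s : M, ∀ t ∈ G, ∃ w : List Bool,
      α (FreeMonoid.ofList (w.map Sum.inr)) = s ∧ τ (FreeMonoid.ofList w) = t

/-- `C` is a quotienting Boolean algebra: a quotienting lattice closed under
complement. -/
def IsQBA (C : LangClass) : Prop :=
  IsLatticeClass C ∧ IsQuotienting C ∧
    ∀ (A : Type) [Fintype A], ∀ L ∈ C A, Lᶜ ∈ C A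

/-- `C` is a finite class: `C(A)` is a finite set for every alphabet. -/
def IsFiniteClass (C : LangClass) : Prop :=
  ∀ (A : Type) [Fintype A], (C A).Finite

/-- The class `C_𝔼`, defined on the alphabets `A ∪ 𝔼`:
`C_𝔼(A ∪ 𝔼) = {γ⁻¹(L) | L ∈ C(A)}` where `γ` erases the letters of `𝔼`. -/
def Ctag (C : LangClass) (A : Type) : Set (Language (A ⊕ Bool)) :=
  {L | ∃ K ∈ C A, L = {w : List (A ⊕ Bool) | eraseE w ∈ K}}

/-- Level `k/2` of the concatenation hierarchy of a basis defined on the alphabets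
`A ∪ 𝔼` (such as `C_𝔼`); indexing as in `hlevel`. -/
def hlevelS (D : ∀ A : Type, Set (Language (A ⊕ Bool))) :
    ℕ → ∀ A : Type, Set (Language (A ⊕ Bool))
  | 0 => D
  | k + 1 => fun A =>
      if k % 2 = 0 then {L | PolClosure (hlevelS D k A) L}
      else {L | BoolClosure (hlevelS D k A) L}

/-- `D` (a class defined on the alphabets `A ∪ 𝔼`) is an extension of `C`. -/
def ExtensionS (C : LangClass) (D : ∀ A : Type, Set (Language (A ⊕ Bool))) : Prop :=
  ∀ (A : Type) [Fintype A],
    (∀ K ∈ C A, {w : List (A ⊕ Bool) | eraseE w ∈ K} ∈ D A) ∧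
    (∀ u : List Bool, ∀ K ∈ D A, {w : List A | padWith u w ∈ K} ∈ C A)

/-- The tagging `P = (τ : 𝔼* → T, G)` fools the class `D` (defined on the alphabets
`A ∪ 𝔼`). -/
def FoolsS {T : Type} [Monoid T] (τ : FreeMonoid Bool →* T) (G : Finset T)
    (D : ∀ A : Type, Set (Language (A ⊕ Bool))) : Prop :=
  ∀ (A : Type) [Fintype A] (M : Type) [Monoid M] [Fintype M]
    (α : FreeMonoid (A ⊕ Bool) →* M),
    (∀ L : Language (A ⊕ Bool), Recognizes α L → BoolClosure (D A) L) →
    ∃ s : M, ∀ t ∈ G, ∃ w : List Bool,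
      α (FreeMonoid.ofList (w.map Sum.inr)) = s ∧ τ (FreeMonoid.ofList w) = t

/-! The idea is that a language of the hierarchy cannot count modulo `k` the letters of a long block
`b ⋯ b` with `b ∈ 𝔼`. A language `γ⁻¹(K)` does not see such a block at all, and being insensitive to
the exact length of long blocks of a fixed letter survives Boolean operations and marked
concatenation: if the marked letter cuts a long block, then one of the two halves is still long and
can absorb a change of length. Consequently, when `α` recognizes only languages of level `n`, the
powers of `α(b)` are eventually constant, equal to some `s`, while the length of `b ^ m` takes every
value modulo `k` for arbitrarily large `m`. -/

section Noncounting

open Filter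

variable {A : Type*} {a c : A} {K L : Language A} {m : ℕ} {p q u v x y : List A}

/-- `L` is noncounting at the letter `c`: for large `m`, replacing a factor `c ^ m` by `c ^ (m + 1)`
never affects membership in `L`, the bound on `m` being uniform in the context `x, y`. This is the
condition by which McNaughton and Papert characterize the star-free languages among the regular
ones, restricted to powers of a single letter. -/
def IsNoncountingAt (c : A) (L : Language A) : Prop :=
  ∀ᶠ m in atTop, ∀ x y : List A,
    x ++ List.replicate m c ++ y ∈ L ↔ x ++ List.replicate (m + 1) c ++ y ∈ L

theorem IsNoncountingAt.sup (hK : IsNoncountingAt c K) (hL : IsNoncountingAt c L) :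
    IsNoncountingAt c (K ⊔ L) :=
  hK.mp <| hL.mono fun _ hLm hKm x y => or_congr (hKm x y) (hLm x y)

theorem IsNoncountingAt.inf (hK : IsNoncountingAt c K) (hL : IsNoncountingAt c L) :
    IsNoncountingAt c (K ⊓ L) :=
  hK.mp <| hL.mono fun _ hLm hKm x y => and_congr (hKm x y) (hLm x y)

theorem IsNoncountingAt.compl (hL : IsNoncountingAt c L) : IsNoncountingAt c Lᶜ :=
  hL.mono fun _ hLm x y => not_congr (hLm x y)

theorem mem_marked_iff :
    u ∈ K * {[a]} * L ↔ ∃ p q, u = p ++ a :: q ∧ p ∈ K ∧ q ∈ L := by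
  simp only [Language.mem_mul]
  constructor
  · rintro ⟨_, ⟨p, hp, _, rfl, rfl⟩, q, hq, rfl⟩
    exact ⟨p, q, by simp, hp, hq⟩
  · rintro ⟨p, q, rfl, hp, hq⟩
    exact ⟨p ++ [a], ⟨p, hp, [a], rfl, rfl⟩, q, hq, by simp⟩

theorem append_eq_append_cons_iff :
    u ++ v = p ++ a :: q ↔
      (∃ z, u = p ++ a :: z ∧ q = z ++ v) ∨ ∃ z, v = z ++ a :: q ∧ p = u ++ z := by
  rw [List.append_eq_append_iff]
  constructor
  · rintro (⟨z, hp, hv⟩ | ⟨z, hu, hq⟩)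
    · exact .inr ⟨z, hv, hp⟩
    · rcases List.cons_eq_append_iff.1 hq with ⟨rfl, hv⟩ | ⟨z', rfl, hq'⟩
      · exact .inr ⟨[], by simpa using hv, by simpa using hu.symm⟩
      · exact .inl ⟨z', hu, hq'⟩
  · rintro (⟨z, hu, hq⟩ | ⟨z, hv, hp⟩)
    · exact .inr ⟨a :: z, hu, by simp [hq]⟩
    · exact .inl ⟨z, hp, hv⟩

theorem replicate_eq_append_cons_iff :
    List.replicate m c = p ++ a :: q ↔
      a = c ∧ ∃ i j, i + j + 1 = m ∧ p = List.replicate i c ∧ q = List.replicate j c := by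
  grind [List.replicate_eq_append_iff]

theorem append_replicate_append_mem_marked_iff :
    x ++ List.replicate m c ++ y ∈ K * {[a]} * L ↔
      (∃ p q, x = p ++ a :: q ∧ p ∈ K ∧ q ++ List.replicate m c ++ y ∈ L) ∨
      (∃ p q, y = p ++ a :: q ∧ x ++ List.replicate m c ++ p ∈ K ∧ q ∈ L) ∨
      (a = c ∧ ∃ i j, i + j + 1 = m ∧
        x ++ List.replicate i c ∈ K ∧ List.replicate j c ++ y ∈ L) := by
  simp only [mem_marked_iff, append_eq_append_cons_iff, replicate_eq_append_cons_iff]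
  constructor
  · rintro ⟨p, q, (⟨z, ⟨z', hx, rfl⟩ | ⟨z', ⟨hac, i, j, hij, rfl, rfl⟩, rfl⟩, rfl⟩ |
      ⟨z, hy, rfl⟩), hp, hq⟩
    · exact .inl ⟨p, z', hx, hp, hq⟩
    · exact .inr (.inr ⟨hac, i, j, hij, hp, hq⟩)
    · exact .inr (.inl ⟨z, q, hy, hp, hq⟩)
  · rintro (⟨p, q, hx, hp, hq⟩ | ⟨p, q, hy, hp, hq⟩ | ⟨hac, i, j, hij, hp, hq⟩)
    · exact ⟨p, _, .inl ⟨_, .inl ⟨q, hx, rfl⟩, rfl⟩, hp, hq⟩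
    · exact ⟨_, q, .inr ⟨p, hy, rfl⟩, hp, hq⟩
    · exact ⟨_, _, .inl ⟨_, .inr ⟨_, ⟨hac, i, j, hij, rfl, rfl⟩, rfl⟩, rfl⟩, hp, hq⟩

theorem exists_add_eq_and_iff_succ {P Q : ℕ → Prop} {M N : ℕ} (hP : ∀ i ≥ M, (P i ↔ P (i + 1)))
    (hQ : ∀ j ≥ N, (Q j ↔ Q (j + 1))) (hm : M + N ≤ m) :
    (∃ i j, i + j = m ∧ P i ∧ Q j) ↔ ∃ i j, i + j = m + 1 ∧ P i ∧ Q j := by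
  constructor
  · rintro ⟨i, j, hij, hi, hj⟩
    rcases le_total M i with hMi | hiM
    · exact ⟨i + 1, j, by omega, (hP i hMi).1 hi, hj⟩
    · exact ⟨i, j + 1, by omega, hi, (hQ j (by omega)).1 hj⟩
  · rintro ⟨i, j, hij, hi, hj⟩
    rcases lt_or_ge M i with hMi | hiM
    · obtain ⟨i, rfl⟩ := Nat.exists_eq_add_one.2 (Nat.zero_lt_of_lt hMi)
      exact ⟨i, j, by omega, (hP i (by omega)).2 hi, hj⟩
    · obtain ⟨j, rfl⟩ := Nat.exists_eq_add_one.2 (show 0 < j by omega)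
      exact ⟨i, j, by omega, hi, (hQ j (by omega)).2 hj⟩

theorem IsNoncountingAt.marked (a : A) (hK : IsNoncountingAt c K) (hL : IsNoncountingAt c L) :
    IsNoncountingAt c (K * {[a]} * L) := by
  obtain ⟨M, hM⟩ := eventually_atTop.1 hK
  obtain ⟨N, hN⟩ := eventually_atTop.1 hL
  refine eventually_atTop.2 ⟨M + N + 1, fun m hm x y => ?_⟩
  obtain ⟨m, rfl⟩ := Nat.exists_eq_add_one.2 (Nat.zero_lt_of_lt hm)
  have marked_in_left (q : List A) := hN (m + 1) (by omega) q y
  have marked_in_right (p : List A) := hM (m + 1) (by omega) x p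
  have marked_in_block := exists_add_eq_and_iff_succ (m := m)
    (fun i hi => by simpa only [List.append_nil] using hM i hi x [])
    (fun j hj => by simpa only [List.nil_append] using hN j hj [] y) (by omega)
  simp only [append_replicate_append_mem_marked_iff, Nat.add_right_cancel_iff, marked_in_left,
    marked_in_right, marked_in_block]

theorem IsNoncountingAt.of_boolClosure {A : Type} {c : A} {S : Set (Language A)} {L : Language A}
    (hS : ∀ L ∈ S, IsNoncountingAt c L) (hL : BoolClosure S L) : IsNoncountingAt c L := by
  induction hL with
  | base h => exact hS _ h
  | compl _ ih => exact ih.compl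
  | union _ _ ihK ihL => exact ihK.sup ihL
  | inter _ _ ihK ihL => exact ihK.inf ihL

theorem IsNoncountingAt.of_polClosure {A : Type} {c : A} {S : Set (Language A)} {L : Language A}
    (hS : ∀ L ∈ S, IsNoncountingAt c L) (hL : PolClosure S L) : IsNoncountingAt c L := by
  induction hL with
  | base h => exact hS _ h
  | union _ _ ihK ihL => exact ihK.sup ihL
  | marked a _ _ ihK ihL => exact ihK.marked a ihL

theorem IsNoncountingAt.of_mem_hlevelS {A : Type} {c : A ⊕ Bool}
    {D : ∀ A : Type, Set (Language (A ⊕ Bool))} (hD : ∀ L ∈ D A, IsNoncountingAt c L) (n : ℕ) :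
    ∀ L ∈ hlevelS D n A, IsNoncountingAt c L := by
  induction n with
  | zero => exact hD
  | succ n ih =>
    intro L hL
    simp only [hlevelS] at hL
    split_ifs at hL
    · exact .of_polClosure ih hL
    · exact .of_boolClosure ih hL

theorem eraseE_append {A : Type} (u v : List (A ⊕ Bool)) :
    eraseE (u ++ v) = eraseE u ++ eraseE v :=
  List.filterMap_append

theorem eraseE_replicate_inr {A : Type} (m : ℕ) (b : Bool) :
    eraseE (List.replicate m (Sum.inr b : A ⊕ Bool)) = [] := by
  simp [eraseE]

theorem IsNoncountingAt.of_mem_ctag {C : LangClass} {A : Type} {L : Language (A ⊕ Bool)}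
    (hL : L ∈ Ctag C A) (b : Bool) : IsNoncountingAt (Sum.inr b) L := by
  obtain ⟨K, -, rfl⟩ := hL
  refine .of_forall fun m x y => ?_
  change eraseE _ ∈ K ↔ eraseE _ ∈ K
  simp only [eraseE_append, eraseE_replicate_inr]

theorem ofList_replicate (m : ℕ) (c : A) :
    FreeMonoid.ofList (List.replicate m c) = FreeMonoid.of c ^ m := by
  induction m with
  | zero => rfl
  | succ m ih => rw [List.replicate_succ, FreeMonoid.ofList_cons, ih, pow_succ']

theorem eventuallyConst_pow_of_isNoncountingAt {A M : Type} [Monoid M] [Finite M]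
    {α : FreeMonoid A →* M} {c : A} (hα : ∀ L, Recognizes α L → IsNoncountingAt c L) :
    EventuallyConst (fun m : ℕ => α (FreeMonoid.of c) ^ m) atTop := by
  have pow_eq_iff : ∀ᶠ m : ℕ in atTop, ∀ s,
      α (FreeMonoid.of c) ^ m = s ↔ α (FreeMonoid.of c) ^ (m + 1) = s :=
    eventually_all.2 fun s => (hα _ ⟨{s}, rfl⟩).mono fun m hm => by
      have hm : α (FreeMonoid.ofList ([] ++ List.replicate m c ++ [])) = s ↔
        α (FreeMonoid.ofList ([] ++ List.replicate (m + 1) c ++ [])) = s := hm [] []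
      simpa only [List.nil_append, List.append_nil, ofList_replicate, map_pow] using hm
  obtain ⟨N, hN⟩ := eventually_atTop.1 pow_eq_iff
  exact eventuallyConst_atTop_nat.2 ⟨N, fun m hm => (hN m hm _).1 rfl⟩

theorem frequently_atTop_pow_eq {T : Type*} [Monoid T] {g t : T} (hg : IsOfFinOrder g)
    (ht : t ∈ Submonoid.powers g) : ∃ᶠ m : ℕ in atTop, g ^ m = t := by
  obtain ⟨d, rfl⟩ := ht
  refine (Nat.frequently_modEq hg.orderOf_pos.ne' d).mono fun m (hm : _ % _ = _ % _) => ?_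
  rw [← pow_mod_orderOf, hm, pow_mod_orderOf]

theorem foolsS_of_isNoncountingAt {T : Type} [Monoid T] {τ : FreeMonoid Bool →* T} {G : Finset T}
    {D : ∀ A : Type, Set (Language (A ⊕ Bool))} {b : Bool}
    (hD : ∀ (A : Type) [Fintype A], ∀ L ∈ D A, IsNoncountingAt (Sum.inr b) L)
    (hG : ∀ t ∈ G, ∃ᶠ m : ℕ in atTop, τ (FreeMonoid.of b) ^ m = t) : FoolsS τ G D := by
  intro A _ M _ _ α hα
  obtain ⟨s, hs⟩ := eventuallyConst_iff_exists_eventuallyEq.1 <|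
    eventuallyConst_pow_of_isNoncountingAt fun L hL => .of_boolClosure (hD A) (hα L hL)
  refine ⟨s, fun t ht => ?_⟩
  obtain ⟨m, hτ, hm⟩ := ((hG t ht).and_eventually hs).exists
  refine ⟨List.replicate m b, ?_, ?_⟩
  · rw [List.map_replicate, ofList_replicate, map_pow]
    exact hm
  · rw [ofList_replicate, map_pow, hτ]

theorem ofAdd_one_zmod_mem_powers (k : ℕ) [NeZero k] (t : Multiplicative (ZMod k)) :
    t ∈ Submonoid.powers (Multiplicative.ofAdd (1 : ZMod k)) :=
  ⟨t.toAdd.val, by simp [← ofAdd_nsmul]⟩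

end Noncounting

theorem statement7_general (C : LangClass) (k : ℕ) [NeZero k] (n : ℕ) :
    FoolsS (FreeMonoid.lift fun _ : Bool => Multiplicative.ofAdd (1 : ZMod k))
      (Finset.univ : Finset (Multiplicative (ZMod k)))
      (hlevelS (Ctag C) n) := by
  refine foolsS_of_isNoncountingAt (b := false)
    (fun A _ => .of_mem_hlevelS (fun L hL => .of_mem_ctag hL false) n) fun t _ => ?_
  rw [FreeMonoid.lift_eval_of]
  exact frequently_atTop_pow_eq (isOfFinOrder_of_finite _) (ofAdd_one_zmod_mem_powers k t)

/-- The tagging `(τ_k : 𝔼* → ℤ/kℤ, T_k)` (with `G = T_k` the whole cyclic monoid and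
`τ_k` mapping every letter to the generator, i.e. computing the length modulo `k`)
fools `C_𝔼[n]`, for every level `n` (indexed in half units) of the concatenation
hierarchy of basis `C_𝔼`. (The hypothesis `NeZero k` ensures that `ℤ/kℤ` is a finite
monoid, i.e. that `(τ_k, T_k)` is a genuine tagging.) -/
theorem statement7 (C : LangClass) (hqba : IsQBA C) (hfin : IsFiniteClass C)
    (hreg : ∀ (A : Type) [Fintype A], ∀ L ∈ C A, IsRegularLang L)
    (k : ℕ) [NeZero k] (n : ℕ) :
    FoolsS (FreeMonoid.lift fun _ : Bool => Multiplicative.ofAdd (1 : ZMod k))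
      (Finset.univ : Finset (Multiplicative (ZMod k)))
      (hlevelS (Ctag C) n) :=
  statement7_general C k n
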